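/- For any basepoint x of the Heisenberg manifold H(ℝ)/H(ℤ), the fundamental group π₁(H(ℝ)/H(ℤ), x) is isomorphic, as a group, to the discrete Heisenberg group H(ℤ). -/

import Mathlib

/-- The Heisenberg group over a commutative ring `R`: upper unitriangular `3 × 3` matrices,
identified with triples `(x, y, z)` with multiplication
`(a,b,c)·(a',b',c') = (a+a', b+b', c+c'+a·b')`. -/
@[ext]
structure Heis (R : Type*) where
  /-- the `(1,2)` entry -/
  x : R
  /-- the `(2,3)` entry -/
  y : R
  /-- the `(1,3)` entry -/
  z : R

namespace Heis

variable {R : Type*} [CommRing R]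

instance : Mul (Heis R) :=
  ⟨fun p q => ⟨p.x + q.x, p.y + q.y, p.z + q.z + p.x * q.y⟩⟩

instance : One (Heis R) := ⟨⟨0, 0, 0⟩⟩

instance : Inv (Heis R) := ⟨fun p => ⟨-p.x, -p.y, -p.z + p.x * p.y⟩⟩

@[simp] theorem mul_x (p q : Heis R) : (p * q).x = p.x + q.x := rfl
@[simp] theorem mul_y (p q : Heis R) : (p * q).y = p.y + q.y := rfl
@[simp] theorem mul_z (p q : Heis R) : (p * q).z = p.z + q.z + p.x * q.y := rfl
@[simp] theorem one_x : (1 : Heis R).x = 0 := rfl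
@[simp] theorem one_y : (1 : Heis R).y = 0 := rfl
@[simp] theorem one_z : (1 : Heis R).z = 0 := rfl
@[simp] theorem inv_x (p : Heis R) : p⁻¹.x = -p.x := rfl
@[simp] theorem inv_y (p : Heis R) : p⁻¹.y = -p.y := rfl
@[simp] theorem inv_z (p : Heis R) : p⁻¹.z = -p.z + p.x * p.y := rfl

instance : Group (Heis R) where
  mul_assoc p q r := by ext <;> simp <;> ring
  one_mul p := by ext <;> simp
  mul_one p := by ext <;> simp
  inv_mul_cancel p := by ext <;> simp

end Heis

/-- `H(ℝ)` is topologized as `ℝ³`. -/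
instance : TopologicalSpace (Heis ℝ) :=
  TopologicalSpace.induced (fun p => (p.x, p.y, p.z)) inferInstance

/-- The inclusion `H(ℤ) → H(ℝ)`. -/
def Heis.castHom : Heis ℤ →* Heis ℝ where
  toFun p := ⟨(p.x : ℝ), (p.y : ℝ), (p.z : ℝ)⟩
  map_one' := by ext <;> simp
  map_mul' p q := by ext <;> simp

/-- The discrete Heisenberg group `H(ℤ)` as a subgroup of `H(ℝ)`. -/
def Heis.HZ : Subgroup (Heis ℝ) := Heis.castHom.range

/-- The Heisenberg manifold: the coset space of `H(ℝ)` by `H(ℤ)`, with the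
quotient topology. -/
abbrev HeisMan : Type := Heis ℝ ⧸ Heis.HZ

/-- The coordinate homeomorphism `H(ℝ) ≃ ℝ³`. -/
def heisHomeo : Heis ℝ ≃ₜ ℝ × ℝ × ℝ where
  toFun p := (p.x, p.y, p.z)
  invFun q := ⟨q.1, q.2.1, q.2.2⟩
  left_inv _ := rfl
  right_inv _ := rfl
  continuous_toFun := continuous_induced_dom
  continuous_invFun := continuous_induced_rng.2 continuous_id

theorem heis_continuous_x : Continuous (fun p : Heis ℝ => p.x) :=
  continuous_fst.comp heisHomeo.continuous

theorem heis_continuous_y : Continuous (fun p : Heis ℝ => p.y) :=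
  (continuous_fst.comp continuous_snd).comp heisHomeo.continuous

theorem heis_continuous_z : Continuous (fun p : Heis ℝ => p.z) :=
  (continuous_snd.comp continuous_snd).comp heisHomeo.continuous

theorem heis_isTopologicalGroup : IsTopologicalGroup (Heis ℝ) where
  continuous_mul := by
    refine continuous_induced_rng.2 ?_
    have hx := heis_continuous_x
    have hy := heis_continuous_y
    have hz := heis_continuous_z
    change Continuous fun p : Heis ℝ × Heis ℝ =>
      (p.1.x + p.2.x, p.1.y + p.2.y, p.1.z + p.2.z + p.1.x * p.2.y)
    exact ((hx.comp continuous_fst).add (hx.comp continuous_snd)).prodMk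
      (((hy.comp continuous_fst).add (hy.comp continuous_snd)).prodMk
        (((hz.comp continuous_fst).add (hz.comp continuous_snd)).add
          ((hx.comp continuous_fst).mul (hy.comp continuous_snd))))
  continuous_inv := by
    refine continuous_induced_rng.2 ?_
    have hx := heis_continuous_x
    have hy := heis_continuous_y
    have hz := heis_continuous_z
    change Continuous fun p : Heis ℝ => (-p.x, -p.y, -p.z + p.x * p.y)
    exact hx.neg.prodMk (hy.neg.prodMk (hz.neg.add (hx.mul hy)))

theorem heis_simplyConnected : SimplyConnectedSpace (Heis ℝ) := by
  haveI : ContractibleSpace (Heis ℝ) := heisHomeo.contractibleSpace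
  infer_instance

theorem int_eq_of_dist {a b : ℤ} (h : dist (b : ℝ) (a : ℝ) < 1) : b = a := by
  rw [Int.dist_cast_real, Int.dist_eq] at h
  have : |b - a| < 1 := by exact_mod_cast h
  have := Int.abs_lt_one_iff.1 this
  omega

theorem heis_isDiscrete : IsDiscrete (Heis.HZ : Set (Heis ℝ)) := by
  refine IsDiscrete.of_nhdsWithin ?_
  rintro _ ⟨p, rfl⟩
  rw [Filter.le_pure_iff, mem_nhdsWithin_iff_exists_mem_nhds_inter]
  refine ⟨{q | dist q.x p.x < 1} ∩ ({q | dist q.y p.y < 1} ∩ {q | dist q.z p.z < 1}), ?_, ?_⟩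
  · refine Filter.inter_mem ?_ (Filter.inter_mem ?_ ?_)
    · exact (isOpen_lt (heis_continuous_x.dist continuous_const) continuous_const).mem_nhds
        (by simp [Heis.castHom])
    · exact (isOpen_lt (heis_continuous_y.dist continuous_const) continuous_const).mem_nhds
        (by simp [Heis.castHom])
    · exact (isOpen_lt (heis_continuous_z.dist continuous_const) continuous_const).mem_nhds
        (by simp [Heis.castHom])
  · rintro _ ⟨⟨h1, h2, h3⟩, q, rfl⟩
    have : q = p := Heis.ext (int_eq_of_dist h1) (int_eq_of_dist h2) (int_eq_of_dist h3)
    rw [this]; rfl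

theorem heis_castHom_injective : Function.Injective Heis.castHom := by
  intro p q h
  have h1 := congrArg Heis.x h
  have h2 := congrArg Heis.y h
  have h3 := congrArg Heis.z h
  exact Heis.ext (Int.cast_injective h1) (Int.cast_injective h2) (Int.cast_injective h3)

/-- For a subgroup `S`, the opposite of the opposite subgroup is `S`. -/
def opOpEquiv {G : Type*} [Group G] (S : Subgroup G) : S ≃* (S.op)ᵐᵒᵖ where
  toEquiv := S.equivOp.trans MulOpposite.opEquiv
  map_mul' _ _ := rfl

/-- For any basepoint, the fundamental group of the Heisenberg manifold `H(ℝ)/H(ℤ)` is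
isomorphic to the discrete Heisenberg group `H(ℤ)`. -/
theorem heisMan_fundamentalGroup :
    ∀ x : HeisMan, Nonempty (FundamentalGroup HeisMan x ≃* Heis ℤ) := by
  intro x
  haveI := heis_isTopologicalGroup
  haveI := heis_simplyConnected
  obtain ⟨e, he⟩ := QuotientGroup.mk_surjective x
  have hp := Heis.HZ.isQuotientCoveringMap heis_isDiscrete
  exact ⟨(hp.fundamentalGroupEquiv ⟨e, he⟩).trans
    ((opOpEquiv Heis.HZ).symm.trans (MonoidHom.ofInjective heis_castHom_injective).symm)⟩
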